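/- arXiv:1805.10243 — 3 statements merged into one kernel-verified Lean document; each statement's English description precedes it below -/
import Mathlib

section
/- Let T=(V,E) be a leafless directed tree with a root, let λ={λ_v}_{v∈V} be a sequence of positive real numbers, and let 1 ≤ q < ∞. Assume the backward shift B : L^q(T,λ) → L^q(T,λ) is bounded. If there exists an increasing sequence of natural numbers {n_k} such that for every u ∈ V one has Ω(u,n_k) → 0 as k → ∞, where Ω(u,n) = γ(u,n)^{−q} Σ_{v∈child^n(u)} λ_v, then B is hypercyclic. -/
open Filter

attribute [local instance] Classical.propDecidable
open scoped ENNReal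

/-- A directed tree: a locally finite directed graph on a (countably infinite)
vertex set with no directed circuits, whose underlying undirected graph is
connected, and in which every vertex has indegree at most one. -/
structure DirTree (V : Type) where
  E : V → V → Prop
  finIn : ∀ v : V, {u : V | E u v}.Finite
  finOut : ∀ v : V, {u : V | E v u}.Finite
  noCircuit : ∀ (n : ℕ) (c : Fin (n + 1) → V), Function.Injective c →
    (∀ i : Fin n, E (c i.castSucc) (c i.succ)) → ¬ E (c (Fin.last n)) (c 0)
  conn : (SimpleGraph.fromRel E).Connected
  indeg : ∀ ⦃u w v : V⦄, E u v → E w v → u = w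

namespace DirTree

variable {V : Type} (T : DirTree V)

/-- A root is a vertex of indegree zero. -/
def IsRoot (r : V) : Prop := ∀ u : V, ¬ T.E u r

/-- The set of children of a vertex. -/
def child (u : V) : Set V := {v : V | T.E u v}

/-- A leaf is a vertex of outdegree zero. -/
def IsLeaf (u : V) : Prop := ¬ (T.child u).Nonempty

/-- The (forward) shift `(S f)(v) = f (parent v)`, with `(S f)(root) = 0`. -/
noncomputable def shift (f : V → ℂ) (v : V) : ℂ :=
  if h : ∃ u : V, T.E u v then f h.choose else 0

/-- The backward shift `(B f)(u) = ∑_{v ∈ child u} f v`. -/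
noncomputable def bwd (f : V → ℂ) (u : V) : ℂ :=
  ∑' v : T.child u, f v.1

/-- The operator `(S* g)(u) = ∑_{v ∈ child u} g v · λ_v / λ_u`. -/
noncomputable def sstar (lam : V → ℝ) (g : V → ℂ) (u : V) : ℂ :=
  ∑' v : T.child u, g v.1 * ((lam v.1 / lam u : ℝ) : ℂ)

/-- `childN n u` is the set of vertices `v` with `parentⁿ v = u`. -/
def childN (T : DirTree V) : ℕ → V → Set V
  | 0, u => {u}
  | n + 1, u => {w : V | ∃ v ∈ T.child u, w ∈ childN T n v}

/-- `γ(u,n)`, the cardinality of `childN n u`. -/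
noncomputable def gam (u : V) (n : ℕ) : ℕ := (T.childN n u).ncard

/-- The `n`-th ancestor `parentⁿ u` of `u` (junk value `u` if it does not exist). -/
noncomputable def anc (u : V) (n : ℕ) : V :=
  if h : ∃ w : V, u ∈ T.childN n w then h.choose else u

/-- A leafless directed tree has a free end if some vertex is such that all of
its descendants have outdegree one. -/
def FreeEnd : Prop :=
  ∃ w : V, ∀ n : ℕ, 0 < n → ∀ v ∈ T.childN n w, (T.child v).ncard = 1

end DirTree

/-- Membership in the weighted space `L^p(T,λ)`. -/
def MemLp' {V : Type} (lam : V → ℝ) (p : ℝ) (f : V → ℂ) : Prop :=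
  Summable (fun v => ‖f v‖ ^ p * lam v)

/-- The norm of the weighted space `L^p(T,λ)`. -/
noncomputable def pNorm {V : Type} (lam : V → ℝ) (p : ℝ) (f : V → ℂ) : ℝ :=
  (∑' v, ‖f v‖ ^ p * lam v) ^ (1 / p)

/-- Boundedness of an operator on `L^p(T,λ)`. -/
def BoundedOn {V : Type} (lam : V → ℝ) (p : ℝ) (A : (V → ℂ) → (V → ℂ)) : Prop :=
  ∃ C : ℝ, 0 ≤ C ∧ ∀ f : V → ℂ, MemLp' lam p f →
    MemLp' lam p (A f) ∧ pNorm lam p (A f) ≤ C * pNorm lam p f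

/-- Hypercyclicity of an operator on `L^p(T,λ)`: some `f ∈ L^p(T,λ)` has dense
orbit `{Aⁿ f : n ∈ ℕ}`. -/
def Hypercyclic {V : Type} (lam : V → ℝ) (p : ℝ) (A : (V → ℂ) → (V → ℂ)) : Prop :=
  ∃ f : V → ℂ, MemLp' lam p f ∧ ∀ g : V → ℂ, MemLp' lam p g → ∀ ε : ℝ, 0 < ε →
    ∃ n : ℕ, MemLp' lam p (A^[n] f - g) ∧ pNorm lam p (A^[n] f - g) < ε

theorem hyp_crit {X : Type*} [NormedAddCommGroup X] [NormedSpace ℂ X] [CompleteSpace X]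
    (B : X →L[ℂ] X) (s : Set X) (hs : s.Countable)
    (hd : Dense (Submodule.span ℂ s : Set X)) (nk : ℕ → ℕ)
    (h0 : ∀ x ∈ s, Tendsto (fun k => (B ^ nk k) x) atTop (nhds 0))
    (h1 : ∀ y ∈ s, ∃ z : ℕ → X, Tendsto z atTop (nhds 0) ∧
      Tendsto (fun k => (B ^ nk k) (z k)) atTop (nhds y)) :
    ∃ x, DenseRange (fun n : ℕ => (B ^ n) x) := by
  have h0' : ∀ x ∈ Submodule.span ℂ s, Tendsto (fun k => (B ^ nk k) x) atTop (nhds 0) := by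
    intro x hx
    induction hx using Submodule.span_induction with
    | mem x h => exact h0 x h
    | zero => simp
    | add x y _ _ hx hy => simpa using hx.add hy
    | smul a x _ hx => simpa using hx.const_smul a
  have h1' : ∀ y ∈ Submodule.span ℂ s, ∃ z : ℕ → X, Tendsto z atTop (nhds 0) ∧
      Tendsto (fun k => (B ^ nk k) (z k)) atTop (nhds y) := by
    intro x hx
    induction hx using Submodule.span_induction with
    | mem x h => exact h1 x h
    | zero => exact ⟨fun _ => 0, by simp, by simp⟩
    | add x y _ _ hx hy =>
      obtain ⟨z, hz, hz'⟩ := hx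
      obtain ⟨w, hw, hw'⟩ := hy
      exact ⟨fun k => z k + w k, by simpa using hz.add hw, by simpa using hz'.add hw'⟩
    | smul a x _ hx =>
      obtain ⟨z, hz, hz'⟩ := hx
      exact ⟨fun k => a • z k, by simpa using hz.const_smul a, by simpa using hz'.const_smul a⟩
  have hsep : TopologicalSpace.SeparableSpace X := by
    have h : TopologicalSpace.IsSeparable (Set.univ : Set X) := by
      rw [← hd.closure_eq]
      exact (TopologicalSpace.IsSeparable.span hs.isSeparable).closure
    exact TopologicalSpace.isSeparable_univ_iff.1 h
  have : SecondCountableTopology X := UniformSpace.secondCountable_of_separable X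
  have hD : Dense (⋂ U ∈ TopologicalSpace.countableBasis X, ⋃ n : ℕ, (fun x => (B ^ n) x) ⁻¹' U) := by
    apply dense_biInter_of_isOpen
    · intro U hU
      refine isOpen_iUnion fun n => ?_
      exact (TopologicalSpace.isOpen_of_mem_countableBasis hU).preimage (B ^ n).continuous
    · exact TopologicalSpace.countable_countableBasis X
    · intro U hU
      have hUo := TopologicalSpace.isOpen_of_mem_countableBasis hU
      have hUn := TopologicalSpace.nonempty_of_mem_countableBasis hU
      rw [dense_iff_inter_open]
      intro W hW hWn
      obtain ⟨x, hxW, hx⟩ := hd.inter_open_nonempty W hW hWn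
      obtain ⟨y, hyU, hy⟩ := hd.inter_open_nonempty U hUo hUn
      obtain ⟨z, hz, hz'⟩ := h1' y hy
      have ha : Tendsto (fun k => x + z k) atTop (nhds x) := by
        simpa using hz.const_add x
      have hb : Tendsto (fun k => (B ^ nk k) (x + z k)) atTop (nhds y) := by
        simpa using (h0' x hx).add hz'
      obtain ⟨k, hk1, hk2⟩ := ((ha.eventually (hW.mem_nhds hxW)).and
        (hb.eventually (hUo.mem_nhds hyU))).exists
      exact ⟨x + z k, hk1, Set.mem_iUnion.2 ⟨nk k, hk2⟩⟩
  obtain ⟨x, hx⟩ := hD.nonempty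
  refine ⟨x, ?_⟩
  rw [DenseRange, (TopologicalSpace.isBasis_countableBasis X).dense_iff]
  intro U hU _
  have := Set.mem_iInter₂.1 hx U hU
  obtain ⟨n, hn⟩ := Set.mem_iUnion.1 this
  exact ⟨(B ^ n) x, hn, n, rfl⟩

namespace DirTree

theorem childN_finite {V : Type} (T : DirTree V) (n : ℕ) (u : V) : (T.childN n u).Finite := by
  induction n generalizing u with
  | zero => exact Set.finite_singleton u
  | succ n ih =>
    have : T.childN (n + 1) u = ⋃ v ∈ T.child u, T.childN n v := by
      ext w; simp [childN]
    rw [this]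
    exact (T.finOut u).biUnion fun v _ => ih v

theorem childN_succ' {V : Type} (T : DirTree V) (n : ℕ) (u w : V) :
    w ∈ T.childN (n + 1) u ↔ ∃ v ∈ T.childN n u, T.E v w := by
  induction n generalizing u with
  | zero => simp [childN, child]
  | succ n ih =>
    constructor
    · rintro ⟨v, hv, hw⟩
      obtain ⟨x, hx, hxw⟩ := (ih v).1 hw
      exact ⟨x, ⟨v, hv, hx⟩, hxw⟩
    · rintro ⟨x, ⟨v, hv, hx⟩, hxw⟩
      exact ⟨v, hv, (ih v).2 ⟨x, hx, hxw⟩⟩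

theorem childN_inj {V : Type} (T : DirTree V) {n : ℕ} {u u' w : V}
    (h : w ∈ T.childN n u) (h' : w ∈ T.childN n u') : u = u' := by
  induction n generalizing w with
  | zero => exact (show w = u from h).symm.trans h'
  | succ n ih =>
    obtain ⟨v, hv, hw⟩ := (T.childN_succ' n u w).1 h
    obtain ⟨v', hv', hw'⟩ := (T.childN_succ' n u' w).1 h'
    have := T.indeg hw hw'
    subst this
    exact ih hv hv'

theorem childN_nonempty {V : Type} (T : DirTree V) (hl : ∀ u : V, ¬ T.IsLeaf u) (n : ℕ) (u : V) :
    (T.childN n u).Nonempty := by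
  induction n generalizing u with
  | zero => exact ⟨u, rfl⟩
  | succ n ih =>
    obtain ⟨v, hv⟩ := not_not.1 (hl u)
    obtain ⟨w, hw⟩ := ih v
    exact ⟨w, v, hv, hw⟩

theorem tsum_set_finite {V α : Type} [AddCommMonoid α] [TopologicalSpace α]
    {s : Set V} (hs : s.Finite) (f : V → α) : ∑' v : s, f v.1 = ∑ᶠ v ∈ s, f v := by
  have := hs.to_subtype
  rw [tsum_eq_finsum (Set.toFinite _), ← finsum_set_coe_eq_finsum_mem]

theorem bwd_eq {V : Type} (T : DirTree V) (f : V → ℂ) (u : V) :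
    T.bwd f u = ∑ᶠ v ∈ T.child u, f v :=
  tsum_set_finite (T.finOut u) f

theorem bwd_iter {V : Type} (T : DirTree V) (n : ℕ) (f : V → ℂ) (u : V) :
    T.bwd^[n] f u = ∑ᶠ v ∈ T.childN n u, f v := by
  induction n generalizing u with
  | zero => simp [childN]
  | succ n ih =>
    have : T.childN (n + 1) u = ⋃ v ∈ T.child u, T.childN n v := by
      ext w; simp [childN]
    rw [Function.iterate_succ_apply', bwd_eq, this, finsum_mem_biUnion]
    · simp_rw [ih]
    · intro v _ v' _ hvv'
      rw [Function.onFun, Set.disjoint_left]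
      intro w hw hw'
      exact hvv' (T.childN_inj hw hw')
    · exact T.finOut u
    · exact fun v _ => T.childN_finite n v

theorem exists_depth {V : Type} (T : DirTree V) {r : V} (hr : T.IsRoot r) (v : V) :
    ∃ n, v ∈ T.childN n r := by
  have hw := T.conn.preconnected r v
  rw [SimpleGraph.reachable_iff_reflTransGen] at hw
  induction hw with
  | refl => exact ⟨0, rfl⟩
  | tail _ h ih =>
    rename_i b c _
    obtain ⟨n, hn⟩ := ih
    rw [SimpleGraph.fromRel_adj] at h
    rcases h.2 with h | h
    · exact ⟨n + 1, (T.childN_succ' n r c).2 ⟨b, hn, h⟩⟩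
    · cases n with
      | zero =>
        have hb : b = r := hn
        subst hb
        exact absurd h (hr c)
      | succ n =>
        obtain ⟨x, hx, hxb⟩ := (T.childN_succ' n r b).1 hn
        exact ⟨n, by rwa [T.indeg h hxb]⟩

theorem depth_lt {V : Type} (T : DirTree V) {r : V} (hr : T.IsRoot r) {m n : ℕ} {u v : V}
    (hv : v ∈ T.childN m r) (h : v ∈ T.childN n u) : n ≤ m := by
  induction n generalizing m v with
  | zero => exact Nat.zero_le _
  | succ n ih =>
    obtain ⟨x, hx, hxv⟩ := (T.childN_succ' n u v).1 h
    cases m with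
    | zero =>
      have : v = r := hv
      subst this
      exact absurd hxv (hr x)
    | succ m =>
      obtain ⟨y, hy, hyv⟩ := (T.childN_succ' m r v).1 hv
      have := T.indeg hxv hyv
      subst this
      exact Nat.succ_le_succ (ih hy hx)

end DirTree

/-- For a leafless rooted directed tree with bounded backward
shift `B` on `L^q(T,λ)`: if there is a strictly increasing sequence `n_k` with
`Ω(u, n_k) = γ(u,n_k)^{-q} ∑_{v ∈ childⁿᵏ(u)} λ_v → 0` for every `u`, then `B`
is hypercyclic. -/
theorem stmt_9 {V : Type} [Countable V] [Infinite V] (T : DirTree V)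
    (hleafless : ∀ u : V, ¬ T.IsLeaf u) (hroot : ∃ r : V, T.IsRoot r)
    (lam : V → ℝ) (hlam : ∀ v : V, 0 < lam v) (q : ℝ) (hq : 1 ≤ q)
    (hb : BoundedOn lam q T.bwd)
    (nk : ℕ → ℕ) (hnk : StrictMono nk)
    (hOmega : ∀ u : V,
      Tendsto (fun k : ℕ =>
          (∑' v : T.childN (nk k) u, lam v.1) / ((T.gam u (nk k) : ℝ)) ^ q)
        atTop (nhds 0)) :
    Hypercyclic lam q T.bwd := by
  obtain ⟨r, hr⟩ := hroot
  have hq0 : 0 < q := by linarith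
  set p : ℝ≥0∞ := ENNReal.ofReal q with hp
  have hpq : p.toReal = q := ENNReal.toReal_ofReal hq0.le
  have hpq0 : 0 < p.toReal := by rw [hpq]; exact hq0
  have hptop : p ≠ ⊤ := ENNReal.ofReal_ne_top
  have : Fact (1 ≤ p) := ⟨by rw [hp]; simpa using hq⟩
  let X := lp (fun _ : V => ℂ) p
  -- the weight
  let d : V → ℝ := fun v => lam v ^ (1 / q)
  have hd : ∀ v, 0 < d v := fun v => Real.rpow_pos_of_pos (hlam v) _
  have hdq : ∀ v, d v ^ q = lam v := fun v => by
    simp only [d]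
    rw [← Real.rpow_mul (hlam v).le, one_div_mul_cancel hq0.ne', Real.rpow_one]
  have hdc : ∀ v, (d v : ℂ) ≠ 0 := fun v => by exact_mod_cast (hd v).ne'
  have hnorm : ∀ (f : V → ℂ) v, ‖f v * (d v : ℂ)‖ ^ q = ‖f v‖ ^ q * lam v := fun f v => by
    rw [norm_mul, Complex.norm_of_nonneg (hd v).le, Real.mul_rpow (norm_nonneg _) (hd v).le, hdq]
  let U : X → V → ℂ := fun x v => x v / (d v : ℂ)
  have hUd : ∀ x v, U x v * (d v : ℂ) = x v := fun x v => div_mul_cancel₀ _ (hdc v)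
  have hUmem : ∀ x, MemLp' lam q (U x) := fun x => by
    have := (memℓp_gen_iff hpq0).1 (lp.memℓp x)
    rw [hpq] at this
    unfold MemLp'
    simpa only [← hnorm, hUd] using this
  have hUnorm : ∀ x, pNorm lam q (U x) = ‖x‖ := fun x => by
    rw [lp.norm_eq_tsum_rpow hpq0, hpq, pNorm]
    simp only [← hnorm, hUd]
  have hUinj : ∀ x y, U x = U y → x = y := fun x y h => by
    apply lp.ext
    funext v
    rw [← hUd x, ← hUd y, h]
  have hWex : ∀ f, MemLp' lam q f → ∃ x : X, U x = f := fun f hf => by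
    refine ⟨⟨fun v => f v * (d v : ℂ), ?_⟩, ?_⟩
    · apply memℓp_gen
      rw [hpq]
      simp only [hnorm]
      exact hf
    · funext v
      exact mul_div_cancel_right₀ _ (hdc v)
  have hUadd : ∀ x y, U (x + y) = U x + U y := fun x y => by
    funext v; simp [U, add_div]
  have hUsub : ∀ x y, U (x - y) = U x - U y := fun x y => by
    funext v; simp [U, sub_div]
  have hUsmul : ∀ (a : ℂ) x, U (a • x) = a • U x := fun a x => by
    funext v; exact mul_div_assoc a (x v) (d v : ℂ)
  have hbadd : ∀ f g, T.bwd (f + g) = T.bwd f + T.bwd g := fun f g => by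
    funext u
    simp only [Pi.add_apply, DirTree.bwd_eq]
    exact finsum_mem_add_distrib (T.finOut u)
  have hbsmul : ∀ (a : ℂ) f, T.bwd (a • f) = a • T.bwd f := fun a f => by
    funext u
    simp only [Pi.smul_apply, DirTree.bwd, smul_eq_mul, tsum_mul_left]
  obtain ⟨C, hC, hbd⟩ := hb
  choose W hW using hWex
  let B0 : X →ₗ[ℂ] X :=
    { toFun := fun x => W (T.bwd (U x)) (hbd _ (hUmem x)).1
      map_add' := fun x y => by
        apply hUinj
        rw [hUadd (W _ _), hW, hW, hW, hUadd, hbadd]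
      map_smul' := fun a x => by
        apply hUinj
        rw [RingHom.id_apply, hUsmul _ (W _ _), hW, hW, hUsmul, hbsmul] }
  have hB0 : ∀ x, U (B0 x) = T.bwd (U x) := fun x => hW _ _
  let B : X →L[ℂ] X := B0.mkContinuous C fun x => by
    rw [← hUnorm, ← hUnorm, hB0]
    exact (hbd _ (hUmem x)).2
  have hB : ∀ x, U (B x) = T.bwd (U x) := hB0
  have hBn : ∀ (n : ℕ) x, U ((B ^ n) x) = T.bwd^[n] (U x) := fun n => by
    induction n with
    | zero => intro x; rfl
    | succ n ih =>
      intro x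
      rw [pow_succ', Function.iterate_succ_apply', mul_apply_eq_comp, hB, ih]
  have hfin : ∀ f : V → ℂ, (Function.support f).Finite → MemLp' lam q f := fun f hf => by
    refine summable_of_ne_finset_zero (s := hf.toFinset) fun v hv => ?_
    have : f v = 0 := by simpa using hv
    rw [this, norm_zero, Real.zero_rpow hq0.ne', zero_mul]
  have hδ : ∀ u : V, MemLp' lam q (Pi.single u (1 : ℂ)) := fun u => by
    refine hfin _ ((Set.finite_singleton u).subset ?_)
    exact Pi.support_single_subset
  let e : V → X := fun u => W _ (hδ u)
  have hUe : ∀ u, U (e u) = Pi.single u (1 : ℂ) := fun u => hW _ _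
  have hU0 : U 0 = 0 := by funext v; simp [U]
  have key : ∃ x, DenseRange (fun n : ℕ => (B ^ n) x) := by
    refine hyp_crit B (Set.range e) (Set.countable_range e) ?_ nk ?_ ?_
    · intro x
      have hs := lp.hasSum_single hptop x
      refine mem_closure_of_tendsto hs (Eventually.of_forall fun s => ?_)
      refine Submodule.sum_mem _ fun v _ => ?_
      have : lp.single p v (x v) = (x v / (d v : ℂ)) • e v := by
        apply hUinj
        rw [hUsmul, hUe]
        funext w
        by_cases hwv : w = v
        · subst hwv
          simp [U]
        · simp [U, hwv]
      rw [this]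
      exact Submodule.smul_mem _ _ (Submodule.subset_span ⟨v, rfl⟩)
    · rintro _ ⟨v, rfl⟩
      obtain ⟨m, hm⟩ := T.exists_depth hr v
      refine tendsto_const_nhds.congr' ?_
      filter_upwards [eventually_gt_atTop m] with k hk
      apply hUinj
      rw [hBn, hU0, hUe]
      funext u
      rw [DirTree.bwd_iter]
      refine (finsum_mem_eq_zero_of_forall_eq_zero fun w hw => ?_).symm
      apply Pi.single_eq_of_ne
      rintro rfl
      have h1 := T.depth_lt hr hm hw
      have h2 := hnk.le_apply (x := k)
      omega
    · rintro _ ⟨u, rfl⟩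
      let F : ℕ → V → ℂ := fun n => (T.childN n u).indicator fun _ => ((T.gam u n : ℂ))⁻¹
      have hF : ∀ n, MemLp' lam q (F n) := fun n =>
        hfin _ ((T.childN_finite n u).subset Set.support_indicator_subset)
      have hg : ∀ n, T.gam u n ≠ 0 := fun n => by
        have := (Set.ncard_pos (T.childN_finite n u)).2 (T.childN_nonempty hleafless n u)
        exact this.ne'
      refine ⟨fun k => W (F (nk k)) (hF _), ?_, ?_⟩
      · rw [tendsto_zero_iff_norm_tendsto_zero]
        have h := (hOmega u).rpow_const (p := 1 / q) (Or.inr (by positivity))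
        rw [Real.zero_rpow (by positivity)] at h
        refine h.congr fun k => ?_
        rw [← hUnorm, hW, pNorm]
        congr 1
        rw [← tsum_div_const, ← tsum_subtype_eq_of_support_subset (s := T.childN (nk k) u)]
        · refine tsum_congr fun v => ?_
          simp only [F]
          rw [Set.indicator_of_mem v.2, norm_inv, Complex.norm_natCast,
            Real.inv_rpow (Nat.cast_nonneg _)]
          ring
        · intro v hv
          by_contra hc
          apply hv
          simp [F, Set.indicator_of_notMem hc, Real.zero_rpow hq0.ne']
      · refine tendsto_const_nhds.congr fun k => ?_
        apply hUinj
        rw [hBn, hUe, hW]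
        funext w
        rw [DirTree.bwd_iter]
        by_cases hwu : w = u
        · subst hwu
          rw [Pi.single_eq_same, finsum_mem_congr rfl (g := fun _ => ((T.gam w (nk k) : ℂ))⁻¹)
            (fun v hv => Set.indicator_of_mem hv _),
            finsum_mem_eq_finite_toFinset_sum _ (T.childN_finite _ _), Finset.sum_const,
            ← Set.ncard_eq_toFinset_card _ (T.childN_finite _ _), nsmul_eq_mul]
          exact (mul_inv_cancel₀ (by exact_mod_cast hg (nk k))).symm
        · rw [Pi.single_eq_of_ne hwu]
          refine (finsum_mem_eq_zero_of_forall_eq_zero fun v hv => ?_).symm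
          refine Set.indicator_of_notMem (fun hv' => hwu (T.childN_inj hv hv')) _
  obtain ⟨x, hx⟩ := key
  refine ⟨U x, hUmem x, fun g hg ε hε => ?_⟩
  obtain ⟨n, hn⟩ := hx.exists_dist_lt (W g hg) hε
  refine ⟨n, ?_⟩
  have : T.bwd^[n] (U x) - g = U ((B ^ n) x - W g hg) := by
    rw [hUsub, hBn, hW]
  rw [this, hUnorm, ← dist_eq_norm, dist_comm]
  exact ⟨hUmem _, hn⟩
end

section
/- Let T=(V,E) be a leafless directed tree with no root, let λ={λ_v}_{v∈V} be a sequence of positive real numbers, and let 1 ≤ q < ∞. Assume the backward shift B : L^q(T,λ) → L^q(T,λ) is bounded. If there exists an increasing sequence of natural numbers {n_k} such that for all u ∈ V one has Θ(u,n_k) → 0 and Ω(u,n_k) → 0 as k → ∞, where Θ(u,n) = γ(parent^n(u),n)^{q−1} λ_{parent^n(u)} and Ω(u,n) = γ(u,n)^{−q} Σ_{v∈child^n(u)} λ_v, then B is hypercyclic. -/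
open Filter

attribute [local instance] Classical.propDecidable
open scoped ENNReal

namespace Stmt14

open Topology

theorem birkhoff {X : Type*} [NormedAddCommGroup X] [NormedSpace ℂ X] [CompleteSpace X]
    (A : X →L[ℂ] X) (D : Set X) (hDc : D.Countable)
    (hD : Dense (Submodule.span ℂ D : Set X)) (nk : ℕ → ℕ)
    (h1 : ∀ x ∈ D, Tendsto (fun k => (A ^ nk k) x) atTop (𝓝 0))
    (h2 : ∀ y ∈ D, ∃ z : ℕ → X, Tendsto z atTop (𝓝 0) ∧ ∀ k, (A ^ nk k) (z k) = y) :
    ∃ x : X, ∀ y : X, ∀ ε : ℝ, 0 < ε → ∃ n : ℕ, ‖(A ^ n) x - y‖ < ε := by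
  have H1 : ∀ x ∈ Submodule.span ℂ D, Tendsto (fun k => (A ^ nk k) x) atTop (𝓝 0) := by
    intro x hx
    induction hx using Submodule.span_induction with
    | mem x h => exact h1 x h
    | zero => simp
    | add x y _ _ hx hy => simpa using hx.add hy
    | smul a x _ hx => simpa using hx.const_smul a
  have H2 : ∀ y ∈ Submodule.span ℂ D,
      ∃ z : ℕ → X, Tendsto z atTop (𝓝 0) ∧ ∀ k, (A ^ nk k) (z k) = y := by
    intro y hy
    induction hy using Submodule.span_induction with
    | mem x h => exact h2 x h
    | zero => exact ⟨fun _ => 0, tendsto_const_nhds, by simp⟩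
    | add x y _ _ hx hy =>
      obtain ⟨z, hz, hz'⟩ := hx
      obtain ⟨w, hw, hw'⟩ := hy
      exact ⟨fun k => z k + w k, by simpa using hz.add hw, fun k => by rw [map_add, hz', hw']⟩
    | smul a x _ hx =>
      obtain ⟨z, hz, hz'⟩ := hx
      exact ⟨fun k => a • z k, by simpa using hz.const_smul a, fun k => by simp [hz']⟩
  have hsep : TopologicalSpace.SeparableSpace X := by
    have h := (hDc.isSeparable.span (R := ℂ)).closure
    rw [hD.closure_eq] at h
    exact TopologicalSpace.isSeparable_univ_iff.1 h
  have hsc : SecondCountableTopology X := UniformSpace.secondCountable_of_separable X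
  let S : TopologicalSpace.countableBasis X → Set X := fun W => ⋃ n : ℕ, Set.preimage (A ^ n) W.1
  have hSo : ∀ W, IsOpen (S W) := fun W => isOpen_iUnion fun n =>
    (TopologicalSpace.isOpen_of_mem_countableBasis W.2).preimage (A ^ n).continuous
  have hSd : ∀ W, Dense (S W) := by
    intro W
    have hWo := TopologicalSpace.isOpen_of_mem_countableBasis W.2
    have hWn := TopologicalSpace.nonempty_of_mem_countableBasis W.2
    rw [dense_iff_inter_open]
    intro U hU hUn
    obtain ⟨x, hxU, hx⟩ := hD.inter_open_nonempty U hU hUn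
    obtain ⟨y, hyW, hy⟩ := hD.inter_open_nonempty W.1 hWo hWn
    obtain ⟨z, hz, hz'⟩ := H2 y hy
    have t1 : Tendsto (fun k => x + z k) atTop (𝓝 x) := by simpa using hz.const_add x
    have t2 : Tendsto (fun k => (A ^ nk k) (x + z k)) atTop (𝓝 y) := by
      simp_rw [map_add, hz']
      simpa using (H1 x hx).add_const y
    obtain ⟨k, hk1, hk2⟩ := ((t1.eventually (hU.mem_nhds hxU)).and
      (t2.eventually (hWo.mem_nhds hyW))).exists
    exact ⟨x + z k, hk1, Set.mem_iUnion.2 ⟨nk k, hk2⟩⟩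
  have : Countable (TopologicalSpace.countableBasis X) :=
    (TopologicalSpace.countable_countableBasis X).to_subtype
  obtain ⟨x, hx⟩ := (dense_iInter_of_isOpen hSo hSd).nonempty
  refine ⟨x, fun y ε hε => ?_⟩
  obtain ⟨W, hW, hyW, hWs⟩ := (TopologicalSpace.isBasis_countableBasis X).exists_subset_of_mem_open
    (Metric.mem_ball_self hε : y ∈ Metric.ball y ε) Metric.isOpen_ball
  obtain ⟨n, hn⟩ := Set.mem_iUnion.1 (Set.mem_iInter.1 hx ⟨W, hW⟩)
  exact ⟨n, by simpa [dist_eq_norm] using hWs hn⟩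

variable {V : Type}

theorem childN_finite (T : DirTree V) (n : ℕ) : ∀ u, (T.childN n u).Finite := by
  induction n with
  | zero => intro u; exact Set.finite_singleton u
  | succ n ih =>
    intro u
    have : T.childN (n + 1) u = ⋃ v ∈ T.child u, T.childN n v := by
      ext w; simp [DirTree.childN]
    rw [this]
    exact (T.finOut u).biUnion fun v _ => ih v

theorem childN_nonempty (T : DirTree V) (hl : ∀ u : V, ¬ T.IsLeaf u) (n : ℕ) :
    ∀ u, (T.childN n u).Nonempty := by
  induction n with
  | zero => intro u; exact Set.singleton_nonempty u
  | succ n ih =>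
    intro u
    obtain ⟨v, hv⟩ := not_not.1 (hl u)
    obtain ⟨w, hw⟩ := ih v
    exact ⟨w, v, hv, hw⟩

theorem gam_pos (T : DirTree V) (hl : ∀ u : V, ¬ T.IsLeaf u) (u : V) (n : ℕ) :
    0 < T.gam u n :=
  (Set.ncard_pos (childN_finite T n u)).2 (childN_nonempty T hl n u)

theorem mem_anc (T : DirTree V) (hr : ∀ r : V, ¬ T.IsRoot r) (n : ℕ) (u : V) :
    u ∈ T.childN n (T.anc u n) := by
  have h : ∀ n : ℕ, ∃ w, u ∈ T.childN n w := by
    intro n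
    induction n with
    | zero => exact ⟨u, rfl⟩
    | succ n ih =>
      obtain ⟨w, hw⟩ := ih
      have := hr w
      simp only [DirTree.IsRoot, not_forall, not_not] at this
      obtain ⟨x, hx⟩ := this
      exact ⟨x, w, hx, hw⟩
  unfold DirTree.anc
  rw [dif_pos (h n)]
  exact (h n).choose_spec

theorem bwd_eq (T : DirTree V) (f : V → ℂ) (u : V) :
    T.bwd f u = ∑ v ∈ (T.finOut u).toFinset, f v := by
  have h := (T.finOut u).coe_toFinset
  unfold DirTree.bwd
  have h2 : T.child u = ((T.finOut u).toFinset : Set V) := h.symm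
  rw [h2]
  exact Finset.tsum_subtype _ f

theorem bwd_delta (T : DirTree V) (u c : V) (h : T.E u c) :
    T.bwd (Pi.single c (1 : ℂ)) = Pi.single u 1 := by
  funext x
  rw [bwd_eq]
  simp only [Pi.single_apply, Finset.sum_ite_eq', Set.Finite.mem_toFinset, Set.mem_ofPred_eq]
  by_cases hx : x = u
  · subst hx; simp [h]
  · have : ¬ T.E x c := fun h' => hx (T.indeg h' h)
    simp [this, hx]

theorem main (T : DirTree V) [Countable V]
    (hleafless : ∀ u : V, ¬ T.IsLeaf u) (hnoroot : ∀ r : V, ¬ T.IsRoot r)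
    (lam : V → ℝ) (hlam : ∀ v : V, 0 < lam v) (q : ℝ) (hq : 1 ≤ q)
    (hb : BoundedOn lam q T.bwd)
    (nk : ℕ → ℕ)
    (hTheta : ∀ u : V,
      Tendsto (fun k : ℕ =>
          ((T.gam (T.anc u (nk k)) (nk k) : ℝ)) ^ (q - 1) * lam (T.anc u (nk k)))
        atTop (nhds 0))
    (hOmega : ∀ u : V,
      Tendsto (fun k : ℕ =>
          (∑' v : T.childN (nk k) u, lam v.1) / ((T.gam u (nk k) : ℝ)) ^ q)
        atTop (nhds 0)) :
    Hypercyclic lam q T.bwd := by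
  have hq0 : 0 < q := by linarith
  obtain ⟨p, hp, hpt⟩ : ∃ p : ℝ≥0∞, p.toReal = q ∧ p ≠ ∞ :=
    ⟨ENNReal.ofReal q, ENNReal.toReal_ofReal hq0.le, ENNReal.ofReal_ne_top⟩
  have hp1 : Fact (1 ≤ p) := ⟨by
    rw [← ENNReal.toReal_le_toReal (by simp) hpt, hp]; simpa using hq⟩
  have hp0 : 0 < p.toReal := hp ▸ hq0
  obtain ⟨w, hw, hwq⟩ : ∃ w : V → ℝ, (∀ v, 0 < w v) ∧ ∀ v, w v ^ q = lam v :=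
    ⟨fun v => lam v ^ (1 / q), fun v => Real.rpow_pos_of_pos (hlam v) _, fun v => by
      rw [← Real.rpow_mul (hlam v).le]; simp [hq0.ne']⟩
  have hwc : ∀ v, (w v : ℂ) ≠ 0 := fun v => by exact_mod_cast (hw v).ne'
  let φ : lp (fun _ : V => ℂ) p →ₗ[ℂ] (V → ℂ) :=
    { toFun := fun x v => x v * (w v : ℂ)⁻¹
      map_add' := fun x y => by ext v; simp [add_mul]
      map_smul' := fun a x => by ext v; simp [mul_assoc] }
  have hφ : ∀ x v, φ x v = x v * (w v : ℂ)⁻¹ := fun _ _ => rfl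
  have hterm : ∀ (a : ℂ) v, ‖a * (w v : ℂ)⁻¹‖ ^ q * lam v = ‖a‖ ^ q := by
    intro a v
    rw [← hwq v, ← Real.mul_rpow (norm_nonneg _) (hw v).le, norm_mul, norm_inv,
      Complex.norm_real, Real.norm_of_nonneg (hw v).le, mul_assoc, inv_mul_cancel₀ (hw v).ne',
      mul_one]
  have hφinj : Function.Injective φ := by
    intro x y h
    ext v
    have := congrFun h v
    simp only [hφ] at this
    exact mul_right_cancel₀ (inv_ne_zero (hwc v)) this
  have hmem : ∀ x, MemLp' lam q (φ x) := by
    intro x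
    have := (lp.memℓp x).summable hp0
    unfold MemLp'
    simpa only [hφ, hterm, hp] using this
  have hnorm : ∀ x, pNorm lam q (φ x) = ‖x‖ := by
    intro x
    rw [lp.norm_eq_tsum_rpow hp0]
    unfold pNorm
    simp only [hφ, hterm, hp]
  have hsurj : ∀ f, MemLp' lam q f → ∃ x, φ x = f := by
    intro f hf
    have hm : Memℓp (fun v => f v * (w v : ℂ)) p := by
      rw [memℓp_gen_iff hp0, hp]
      refine hf.congr fun v => ?_
      rw [← hterm (f v * (w v : ℂ)) v, mul_assoc, mul_inv_cancel₀ (hwc v), mul_one]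
    refine ⟨⟨_, hm⟩, ?_⟩
    funext v
    rw [hφ]
    change f v * (w v : ℂ) * (w v : ℂ)⁻¹ = f v
    rw [mul_assoc, mul_inv_cancel₀ (hwc v), mul_one]
  obtain ⟨C, hC, hCb⟩ := hb
  have hA : ∀ x, ∃ y, φ y = T.bwd (φ x) := fun x => hsurj _ (hCb _ (hmem x)).1
  choose A0 hA0 using hA
  let A1 : lp (fun _ : V => ℂ) p →ₗ[ℂ] lp (fun _ : V => ℂ) p :=
    { toFun := A0
      map_add' := fun x y => hφinj (by
        rw [map_add, hA0, hA0, hA0, map_add]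
        funext u
        simp [bwd_eq, Finset.sum_add_distrib])
      map_smul' := fun a x => hφinj (by
        rw [RingHom.id_apply, map_smul, hA0, hA0, map_smul]
        funext u
        simp [bwd_eq, Finset.mul_sum]) }
  let A : lp (fun _ : V => ℂ) p →L[ℂ] lp (fun _ : V => ℂ) p := A1.mkContinuous C (by
    intro x
    rw [← hnorm, ← hnorm]
    change pNorm lam q (φ (A0 x)) ≤ _
    rw [hA0]
    exact (hCb _ (hmem x)).2)
  have hAφ : ∀ x, φ (A x) = T.bwd (φ x) := hA0
  have hAn : ∀ n x, φ ((A ^ n) x) = T.bwd^[n] (φ x) := by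
    intro n x
    induction n with
    | zero => simp
    | succ n ih =>
      rw [pow_succ', Function.iterate_succ_apply', ← ih, ← hAφ]; rfl

  have hind : ∀ (s : Finset V) (c : ℂ),
      HasSum (fun v => ‖(if v ∈ s then c else 0 : ℂ)‖ ^ q * lam v)
        (‖c‖ ^ q * ∑ v ∈ s, lam v) := by
    intro s c
    rw [Finset.mul_sum]
    have := hasSum_sum_of_ne_finset_zero (L := .unconditional V) (s := s)
      (f := fun v => ‖(if v ∈ s then c else 0 : ℂ)‖ ^ q * lam v)
      (fun v hv => by simp [hv, hq0.ne'])
    convert this using 1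
    exact Finset.sum_congr rfl fun v hv => by simp [hv]
  have hdel : ∀ u : V, MemLp' lam q (Pi.single u (1 : ℂ)) := by
    intro u
    refine (hind {u} 1).summable.congr fun v => ?_
    simp [Pi.single_apply]
  choose d hd using fun u => hsurj _ (hdel u)
  have hdn : ∀ u, ‖d u‖ = lam u ^ (1 / q) := by
    intro u
    rw [← hnorm, hd]
    unfold pNorm
    congr 1
    rw [← (by simp : ‖(1 : ℂ)‖ ^ q * ∑ v ∈ {u}, lam v = lam u), ← (hind {u} 1).tsum_eq]
    simp [Pi.single_apply]
  have hAd : ∀ n u v, v ∈ T.childN n u → (A ^ n) (d v) = d u := by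
    intro n
    induction n with
    | zero => rintro u v h; obtain rfl : v = u := h; simp
    | succ n ih =>
      rintro u v ⟨c, hc, hv⟩
      rw [pow_succ']
      change A ((A ^ n) (d v)) = _
      rw [ih c v hv]
      apply hφinj
      rw [hAφ, hd, hd]
      exact bwd_delta T u c hc
  have hroot : ∀ g : ℕ → ℝ, Tendsto g atTop (𝓝 0) →
      Tendsto (fun k => g k ^ (1 / q)) atTop (𝓝 0) := by
    intro g hg
    have := hg.rpow_const (p := 1 / q) (Or.inr (by positivity))
    rwa [Real.zero_rpow (by positivity)] at this
  have key := birkhoff A (Set.range d) (Set.countable_range d) ?_ nk ?_ ?_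
  · obtain ⟨x, hx⟩ := key
    refine ⟨φ x, hmem x, fun g hg ε hε => ?_⟩
    obtain ⟨y, rfl⟩ := hsurj g hg
    obtain ⟨n, hn⟩ := hx y ε hε
    refine ⟨n, ?_⟩
    rw [← hAn, ← map_sub]
    exact ⟨hmem _, by rwa [hnorm]⟩
  · intro x
    refine mem_closure_of_tendsto (lp.hasSum_single hpt x) (Eventually.of_forall fun s => ?_)
    refine Submodule.sum_mem _ fun v _ => ?_
    have : lp.single p v (x v) = (x v * (w v : ℂ)⁻¹) • d v := by
      apply hφinj
      rw [map_smul, hd]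
      funext i
      rw [hφ]
      by_cases h : i = v
      · subst h; simp
      · simp [h]
    rw [this]
    exact Submodule.smul_mem _ _ (Submodule.subset_span ⟨v, rfl⟩)
  · rintro _ ⟨u, rfl⟩
    rw [tendsto_zero_iff_norm_tendsto_zero]
    simp_rw [fun k => hAd (nk k) _ u (mem_anc T hnoroot (nk k) u), hdn]
    apply hroot
    refine squeeze_zero (fun k => (hlam _).le) (fun k => ?_) (hTheta u)
    have h1 : (1 : ℝ) ≤ T.gam (T.anc u (nk k)) (nk k) := by
      exact_mod_cast gam_pos T hleafless _ _
    exact le_mul_of_one_le_left (hlam _).le (Real.one_le_rpow h1 (by linarith))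
  · rintro _ ⟨u, rfl⟩
    let s : ℕ → Finset V := fun k => (childN_finite T (nk k) u).toFinset
    have hs : ∀ k v, v ∈ s k ↔ v ∈ T.childN (nk k) u := fun k v => Set.Finite.mem_toFinset _
    have hcard : ∀ k, (s k).card = T.gam u (nk k) := fun k =>
      (Set.ncard_eq_toFinset_card _ (childN_finite T (nk k) u)).symm
    refine ⟨fun k => ((T.gam u (nk k) : ℝ) : ℂ)⁻¹ • ∑ v ∈ s k, d v, ?_, fun k => ?_⟩
    · rw [tendsto_zero_iff_norm_tendsto_zero]
      refine (hroot _ (hOmega u)).congr fun k => ?_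
      rw [← hnorm]
      unfold pNorm
      congr 1
      have e : φ (((T.gam u (nk k) : ℝ) : ℂ)⁻¹ • ∑ v ∈ s k, d v) =
          fun v => if v ∈ s k then ((T.gam u (nk k) : ℝ) : ℂ)⁻¹ else 0 := by
        rw [map_smul, map_sum]
        simp only [hd]
        funext v
        rw [Pi.smul_apply, Finset.sum_apply, smul_eq_mul]
        simp [Pi.single_apply]
      rw [e, (hind _ _).tsum_eq, norm_inv, Complex.norm_real, Real.norm_of_nonneg (by positivity),
        Real.inv_rpow (by positivity), div_eq_inv_mul]
      congr 1
      have h2 : T.childN (nk k) u = (s k : Set V) := by ext v; simp [hs]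
      rw [h2]
      exact Finset.tsum_subtype _ lam
    · rw [map_smul, map_sum, Finset.sum_congr rfl fun v hv => hAd (nk k) u v ((hs k v).1 hv),
        Finset.sum_const, hcard, ← Nat.cast_smul_eq_nsmul ℂ, smul_smul]
      have : (T.gam u (nk k) : ℂ) ≠ 0 := by exact_mod_cast (gam_pos T hleafless u (nk k)).ne'
      simp [this]

end Stmt14

/-- For a leafless unrooted directed tree with bounded backward
shift `B` on `L^q(T,λ)`: if there is a strictly increasing sequence `n_k` with
`Θ(u,n_k) = γ(parentⁿᵏ u, n_k)^{q-1} λ_{parentⁿᵏ u} → 0` and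
`Ω(u,n_k) = γ(u,n_k)^{-q} ∑_{v ∈ childⁿᵏ(u)} λ_v → 0` for every `u`, then `B`
is hypercyclic. -/
theorem stmt_14 {V : Type} [Countable V] [Infinite V] (T : DirTree V)
    (hleafless : ∀ u : V, ¬ T.IsLeaf u) (hnoroot : ∀ r : V, ¬ T.IsRoot r)
    (lam : V → ℝ) (hlam : ∀ v : V, 0 < lam v) (q : ℝ) (hq : 1 ≤ q)
    (hb : BoundedOn lam q T.bwd)
    (nk : ℕ → ℕ) (hnk : StrictMono nk)
    (hTheta : ∀ u : V,
      Tendsto (fun k : ℕ =>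
          ((T.gam (T.anc u (nk k)) (nk k) : ℝ)) ^ (q - 1) * lam (T.anc u (nk k)))
        atTop (nhds 0))
    (hOmega : ∀ u : V,
      Tendsto (fun k : ℕ =>
          (∑' v : T.childN (nk k) u, lam v.1) / ((T.gam u (nk k) : ℝ)) ^ q)
        atTop (nhds 0)) :
    Hypercyclic lam q T.bwd := by
  exact Stmt14.main T hleafless hnoroot lam hlam q hq hb nk hTheta hOmega
end

section
/- Let 1 ≤ q < ∞, let r ∈ ℕ, and let s ∈ ℝ with s > r^{q−1}. Let T be the infinite unrooted leafless directed tree in which every vertex has outdegree exactly r. Fix a vertex w*, let H = {w ∈ V : w ∈ child^n(parent^n(w*)) for some n ∈ ℕ}, and for each u ∈ V set λ_u = s^{−d} where d = dist(u,H) is the distance from u to the set H in the underlying undirected graph. Then the backward shift B : L^q(T,λ) → L^q(T,λ) is hypercyclic. -/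
open Filter

attribute [local instance] Classical.propDecidable
open scoped ENNReal

/-- The distance from a vertex to a set of vertices in a graph. -/
noncomputable def distToSet {V : Type} (G : SimpleGraph V) (H : Set V) (u : V) : ℕ :=
  sInf ((fun w => G.dist u w) '' H)

open Topology in
/-- Birkhoff / hypercyclicity criterion. -/
theorem hc_criterion {X : Type*} [NormedAddCommGroup X] [NormedSpace ℂ X] [CompleteSpace X]
    [TopologicalSpace.SeparableSpace X] (A : X →L[ℂ] X) (S : Set X)
    (hS : Dense ((Submodule.span ℂ S : Submodule ℂ X) : Set X))
    (h1 : ∀ x ∈ S, Tendsto (fun n : ℕ => A^[n] x) atTop (𝓝 0))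
    (h2 : ∀ x ∈ S, ∃ R : ℕ → X, Tendsto R atTop (𝓝 0) ∧ ∀ n, A^[n] (R n) = x) :
    ∃ x : X, Dense (Set.range fun n : ℕ => A^[n] x) := by
  have hpow : ∀ n : ℕ, (A ^ n : X →L[ℂ] X) = A^[n] := fun n => by
    ext x; simp
  have g1 : ∀ x ∈ Submodule.span ℂ S, Tendsto (fun n : ℕ => A^[n] x) atTop (𝓝 0) := by
    intro x hx
    simp only [← hpow] at h1 ⊢
    induction hx using Submodule.span_induction with
    | mem x h => exact h1 x h
    | zero => simp
    | add x y _ _ hx hy => simpa using hx.add hy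
    | smul c x _ hx => simpa using hx.const_smul c
  have g2 : ∀ x ∈ Submodule.span ℂ S,
      ∃ R : ℕ → X, Tendsto R atTop (𝓝 0) ∧ ∀ n, A^[n] (R n) = x := by
    intro x hx
    simp only [← hpow] at h2 ⊢
    induction hx using Submodule.span_induction with
    | mem x h => exact h2 x h
    | zero => exact ⟨fun _ => 0, tendsto_const_nhds, by simp⟩
    | add x y _ _ hx hy =>
      obtain ⟨R, hR, hR'⟩ := hx
      obtain ⟨Q, hQ, hQ'⟩ := hy
      exact ⟨fun n => R n + Q n, by simpa using hR.add hQ, fun n => by rw [map_add, hR', hQ']⟩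
    | smul c x _ hx =>
      obtain ⟨R, hR, hR'⟩ := hx
      exact ⟨fun n => c • R n, by simpa using hR.const_smul c, fun n => by rw [map_smul, hR']⟩
  have : SecondCountableTopology X := UniformSpace.secondCountable_of_separable X
  have hcont : ∀ n : ℕ, Continuous (A^[n]) := fun n => A.continuous.iterate n
  have hb := TopologicalSpace.isBasis_countableBasis X
  have key : Dense (⋂ U ∈ TopologicalSpace.countableBasis X, ⋃ n : ℕ, A^[n] ⁻¹' U) := by
    apply dense_biInter_of_isOpen
    · intro U hU
      exact isOpen_iUnion fun n => (hb.isOpen hU).preimage (hcont n)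
    · exact TopologicalSpace.countable_countableBasis X
    · intro U hU
      rw [dense_iff_inter_open]
      intro W hW hWn
      obtain ⟨u, huW, hu⟩ := hS.inter_open_nonempty W hW hWn
      obtain ⟨v, hvU, hv⟩ := hS.inter_open_nonempty U (hb.isOpen hU)
        (TopologicalSpace.nonempty_of_mem_countableBasis hU)
      obtain ⟨R, hR, hR'⟩ := g2 v hv
      have t1 : Tendsto (fun n => u + R n) atTop (𝓝 u) := by
        simpa using hR.const_add u
      have t2 : Tendsto (fun n => A^[n] (u + R n)) atTop (𝓝 v) := by
        have : ∀ n, A^[n] (u + R n) = A^[n] u + v := fun n => by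
          conv_rhs => rw [← hR' n]
          simp only [← hpow, map_add]
        simp only [this]
        simpa using (g1 u hu).add_const v
      obtain ⟨n, hn1, hn2⟩ := ((t1.eventually (hW.mem_nhds huW)).and
        (t2.eventually ((hb.isOpen hU).mem_nhds hvU))).exists
      exact ⟨u + R n, hn1, Set.mem_iUnion.2 ⟨n, hn2⟩⟩
  obtain ⟨x, hx⟩ := key.nonempty
  refine ⟨x, ?_⟩
  rw [hb.dense_iff]
  intro U hU _
  have := Set.mem_iInter₂.1 hx U hU
  obtain ⟨n, hn⟩ := Set.mem_iUnion.1 this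
  exact ⟨_, hn, n, rfl⟩

namespace DirTree

variable {V : Type} (T : DirTree V)

theorem exists_parent (hnoroot : ∀ v : V, ¬ T.IsRoot v) :
    ∃ p : V → V, ∀ u v, T.E u v ↔ p v = u := by
  have : ∀ v, ∃ u, T.E u v := fun v => by
    have := hnoroot v
    unfold IsRoot at this
    push Not at this
    exact this
  choose p hp using this
  exact ⟨p, fun u v => ⟨fun h => T.indeg (hp v) h, fun h => h ▸ hp v⟩⟩

theorem no_periodic (p : V → V) (hp : ∀ u v, T.E u v ↔ p v = u) (x : V) (k : ℕ) (hk : 0 < k) :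
    p^[k] x ≠ x := by
  intro h
  have hper : x ∈ Function.periodicPts p := ⟨k, hk, h⟩
  set m := Function.minimalPeriod p x with hm
  have hm0 : 0 < m := Function.minimalPeriod_pos_of_mem_periodicPts hper
  obtain ⟨n, hn⟩ : ∃ n, m = n + 1 := ⟨m - 1, by omega⟩
  refine T.noCircuit n (fun i => p^[n - i.1] x) ?_ ?_ ?_
  · intro i j hij
    have := Function.iterate_injOn_Iio_minimalPeriod (f := p) (x := x)
      (show n - i.1 ∈ Set.Iio m by simp; omega) (show n - j.1 ∈ Set.Iio m by simp; omega) hij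
    ext
    have := i.2
    have := j.2
    omega
  · intro i
    rw [hp]
    have := i.2
    simp only [Fin.val_castSucc, Fin.val_succ]
    rw [← Function.iterate_succ_apply' p]
    congr 2
    omega
  · rw [hp]
    simp only [Fin.val_last, Fin.val_zero]
    rw [← Function.iterate_succ_apply' p]
    have : p^[m] x = x := Function.iterate_minimalPeriod
    rw [hn] at this
    simpa using this

theorem exists_level (p : V → V) (hp : ∀ u v, T.E u v ↔ p v = u) :
    ∃ l : V → ℤ, ∀ v, l (p v) = l v - 1 := by
  have hadj : ∀ u v, (SimpleGraph.fromRel T.E).Adj u v → p v = u ∨ p u = v := by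
    intro u v h
    rw [SimpleGraph.fromRel_adj, hp, hp] at h
    exact h.2
  have hc : ∀ u v, ∃ m n, p^[m] u = p^[n] v := by
    intro u v
    obtain ⟨W⟩ := T.conn.preconnected u v
    induction W with
    | nil => exact ⟨0, 0, rfl⟩
    | @cons a b c h W ih =>
      obtain ⟨m, n, hmn⟩ := ih
      rcases hadj _ _ h with h | h
      · refine ⟨m, n + 1, ?_⟩
        rw [Function.iterate_succ_apply', ← hmn, ← h, ← Function.iterate_succ_apply,
          Function.iterate_succ_apply']
      · exact ⟨m + 1, n, by rw [Function.iterate_succ_apply, h, hmn]⟩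
  have hinj : ∀ x a b, p^[a] x = p^[b] x → a ≤ b := by
    intro x a b hab
    by_contra hlt
    push Not at hlt
    apply T.no_periodic p hp (p^[b] x) (a - b) (by omega)
    rw [← Function.iterate_add_apply, Nat.sub_add_cancel hlt.le, hab]
  obtain ⟨w⟩ := T.conn.nonempty
  choose m n hmn using hc w
  refine ⟨fun v => (n v : ℤ) - m v, fun v => ?_⟩
  have e : p^[m v + (n (p v) + 1)] w = p^[m (p v) + n v] w := by
    rw [Nat.add_comm (m v), Nat.add_comm (m (p v)), Function.iterate_add_apply p _ (m v),
      Function.iterate_add_apply p _ (m (p v)), hmn, hmn,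
      ← Function.iterate_add_apply, ← Function.iterate_succ_apply, ← Function.iterate_add_apply]
    congr 1
    omega
  have := hinj _ _ _ e
  have := hinj _ _ _ e.symm
  push_cast
  omega

theorem mem_childN (p : V → V) (hp : ∀ u v, T.E u v ↔ p v = u) (n : ℕ) (x w : V) :
    w ∈ T.childN n x ↔ p^[n] w = x := by
  induction n generalizing x with
  | zero => simp [childN]
  | succ n ih =>
    simp only [childN, child, Set.mem_ofPred_eq, ih, hp]
    rw [Function.iterate_succ_apply']
    simp

end DirTree

/-- Structural facts about the distance. -/
theorem dist_facts {V : Type} (T : DirTree V) (p : V → V) (hp : ∀ u v, T.E u v ↔ p v = u)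
    (l : V → ℤ) (hl : ∀ v, l (p v) = l v - 1) (wstar : V) (d : V → ℕ)
    (hd : d = distToSet (SimpleGraph.fromRel T.E)
            {w : V | ∃ n : ℕ, 0 < n ∧ w ∈ T.childN n (T.anc wstar n)}) :
    (∀ v, d v ≤ d (p v) + 1) ∧ ∀ v, |l v - l wstar| ≤ d v := by
  have hlv : ∀ n v, l (p^[n] v) = l v - n := by
    intro n
    induction n with
    | zero => simp
    | succ n ih => intro v; rw [Function.iterate_succ_apply', hl, ih]; push_cast; ring
  have hanc : ∀ n, T.anc wstar n = p^[n] wstar := by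
    intro n
    have h : ∃ w : V, wstar ∈ T.childN n w := ⟨_, (T.mem_childN p hp n _ _).2 rfl⟩
    unfold DirTree.anc
    rw [dif_pos h]
    exact ((T.mem_childN p hp n _ _).1 h.choose_spec).symm
  set H := {w : V | ∃ n : ℕ, 0 < n ∧ w ∈ T.childN n (T.anc wstar n)} with hH
  have hw : wstar ∈ H := ⟨1, one_pos, by rw [T.mem_childN p hp, hanc]⟩
  have hHl : ∀ w ∈ H, l w = l wstar := by
    rintro w ⟨n, _, hn⟩
    rw [T.mem_childN p hp, hanc] at hn
    have := congrArg l hn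
    rw [hlv, hlv] at this
    omega
  set G := SimpleGraph.fromRel T.E with hG
  have hatt : ∀ v, ∃ w ∈ H, d v = G.dist v w := by
    intro v
    have : ((fun w => G.dist v w) '' H).Nonempty := ⟨_, wstar, hw, rfl⟩
    obtain ⟨w, hw, h⟩ := Nat.sInf_mem this
    exact ⟨w, hw, by rw [hd]; exact h.symm⟩
  have hle : ∀ v, ∀ w ∈ H, d v ≤ G.dist v w := by
    intro v w hw
    rw [hd]
    exact Nat.sInf_le ⟨w, hw, rfl⟩
  have hadj : ∀ v, G.Adj v (p v) := by
    intro v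
    rw [hG, SimpleGraph.fromRel_adj]
    refine ⟨fun h => ?_, Or.inr ((hp _ _).2 rfl)⟩
    have := hl v
    rw [← h] at this
    omega
  have hwalk : ∀ u v, ∀ W : G.Walk u v, |l u - l v| ≤ W.length := by
    intro u v W
    induction W with
    | nil => simp
    | @cons a b c h W ih =>
      rw [hG, SimpleGraph.fromRel_adj, hp, hp] at h
      rw [SimpleGraph.Walk.length_cons]
      push_cast
      have : l a = l b - 1 ∨ l b = l a - 1 := by
        rcases h.2 with h | h
        · left; rw [← h, hl]
        · right; rw [← h, hl]
      rw [abs_le] at ih ⊢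
      omega
  constructor
  · intro v
    obtain ⟨w, hw, h⟩ := hatt (p v)
    have h1 := hle v w hw
    have h2 := T.conn.dist_triangle (u := v) (v := p v) (w := w)
    have h3 : G.dist v (p v) = 1 := SimpleGraph.dist_eq_one_iff_adj.2 (hadj v)
    change G.dist v w ≤ G.dist v (p v) + G.dist (p v) w at h2
    omega
  · intro v
    obtain ⟨w, hw, h⟩ := hatt v
    obtain ⟨W, hW⟩ := T.conn.exists_walk_length_eq_dist v w
    have := hwalk v w W
    rw [hHl w hw] at this
    rw [h]
    change W.length = G.dist v w at hW
    rw [← hW]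
    exact this

/-- Composition with an injective map and multiplication by a bounded weight on `ℓ^p`. -/
theorem exists_compCLM {V : Type} (P : ℝ≥0∞) [Fact (1 ≤ P)] (hP : P ≠ ∞) (c : V → V)
    (hc : Function.Injective c) (m : V → ℝ) (K : ℝ) (hm0 : ∀ u, 0 ≤ m u) (hm : ∀ u, m u ≤ K) :
    ∃ C : lp (fun _ : V => ℂ) P →L[ℂ] lp (fun _ : V => ℂ) P,
      ∀ x u, C x u = (m u : ℂ) * x (c u) := by
  have hPpos : 0 < P.toReal :=
    ENNReal.toReal_pos (zero_lt_one.trans_le (Fact.out : 1 ≤ P)).ne' hP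
  have hbd : ∀ (x : lp (fun _ : V => ℂ) P) (u : V),
      ‖(m u : ℂ) * x (c u)‖ ^ P.toReal ≤ K ^ P.toReal * ‖x (c u)‖ ^ P.toReal := by
    intro x u
    have hK : 0 ≤ K := (hm0 u).trans (hm u)
    rw [← Real.mul_rpow hK (norm_nonneg _)]
    apply Real.rpow_le_rpow (norm_nonneg _) _ hPpos.le
    rw [norm_mul, Complex.norm_real, Real.norm_of_nonneg (hm0 u)]
    exact mul_le_mul_of_nonneg_right (hm u) (norm_nonneg _)
  have hsum : ∀ x : lp (fun _ : V => ℂ) P, Summable fun u => ‖x (c u)‖ ^ P.toReal := fun x =>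
    ((memℓp_gen_iff hPpos).1 (lp.memℓp x)).comp_injective hc
  have hmem : ∀ x : lp (fun _ : V => ℂ) P, Memℓp (fun u => (m u : ℂ) * x (c u)) P := by
    intro x
    rw [memℓp_gen_iff hPpos]
    exact Summable.of_nonneg_of_le (fun u => by positivity) (hbd x) ((hsum x).mul_left _)
  let L : lp (fun _ : V => ℂ) P →ₗ[ℂ] lp (fun _ : V => ℂ) P :=
    { toFun := fun x => ⟨fun u => (m u : ℂ) * x (c u), hmem x⟩
      map_add' := fun x y => by
        ext u
        exact mul_add _ _ _
      map_smul' := fun a x => by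
        ext u
        simp
        ring }
  refine ⟨L.mkContinuous (max K 0) ?_, fun x u => rfl⟩
  intro x
  have hK0 : 0 ≤ max K 0 := le_max_right _ _
  apply lp.norm_le_of_tsum_le hPpos (by positivity)
  rw [Real.mul_rpow hK0 (norm_nonneg _), lp.norm_rpow_eq_tsum hPpos, ← tsum_mul_left]
  have hs1 := ((memℓp_gen_iff hPpos).1 (lp.memℓp x))
  calc ∑' u, ‖L x u‖ ^ P.toReal
      ≤ ∑' u, (max K 0) ^ P.toReal * ‖x (c u)‖ ^ P.toReal := by
        refine Summable.tsum_le_tsum (fun u => (hbd x u).trans ?_)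
          ((memℓp_gen_iff hPpos).1 (lp.memℓp (L x))) ((hsum x).mul_left _)
        have hK : 0 ≤ K := (hm0 u).trans (hm u)
        rw [max_eq_left hK]
    _ ≤ ∑' u, (max K 0) ^ P.toReal * ‖x u‖ ^ P.toReal :=
        tsum_comp_le_tsum_of_inj (hs1.mul_left _) (fun u => by positivity) hc

/-- Let `r ∈ ℕ` and `s > r^{q-1}`. On the unrooted leafless
directed tree in which every vertex has outdegree `r`, with weights
`λ_u = s^{-dist(u,H)}` where `H` is the set of vertices sharing a common
`n`-ancestor with a fixed vertex `w*`, the backward shift `B` on `L^q(T,λ)` is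
hypercyclic. -/
theorem stmt_15 {V : Type} [Countable V] [Infinite V] (T : DirTree V)
    (q : ℝ) (hq : 1 ≤ q) (r : ℕ) (s : ℝ) (hs : (r : ℝ) ^ (q - 1) < s)
    (hnoroot : ∀ v : V, ¬ T.IsRoot v) (hleafless : ∀ u : V, ¬ T.IsLeaf u)
    (hdeg : ∀ u : V, (T.child u).ncard = r)
    (wstar : V) :
    Hypercyclic
      (fun u : V =>
        (s ^ distToSet (SimpleGraph.fromRel T.E)
            {w : V | ∃ n : ℕ, 0 < n ∧ w ∈ T.childN n (T.anc wstar n)} u)⁻¹)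
      q T.bwd := by
  obtain ⟨p, hp⟩ := T.exists_parent hnoroot
  obtain ⟨l, hl⟩ := T.exists_level p hp
  set d : V → ℕ := distToSet (SimpleGraph.fromRel T.E)
    {w : V | ∃ n : ℕ, 0 < n ∧ w ∈ T.childN n (T.anc wstar n)} with hd
  obtain ⟨hd1, hd2⟩ := dist_facts T p hp l hl wstar d hd
  have hfin : ∀ u, (T.child u).Finite := fun u => T.finOut u
  have hne : ∀ u, (T.child u).Nonempty := fun u => not_not.1 (hleafless u)
  have hr : 1 ≤ r := by
    rw [← hdeg wstar]
    exact (Set.ncard_pos (hfin _)).2 (hne _)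
  have hs1 : 1 < s := lt_of_le_of_lt
    (Real.one_le_rpow (by exact_mod_cast hr) (by linarith)) hs
  have hs0 : 0 < s := by linarith
  have hq0 : 0 < q := by linarith
  -- children as `Fin r`
  have hE : ∀ u, Nonempty (Fin r ≃ T.child u) := by
    intro u
    haveI : Finite (T.child u) := (hfin u).to_subtype
    exact ⟨(Finite.equivFinOfCardEq (hdeg u)).symm⟩
  let e : ∀ u, Fin r ≃ T.child u := fun u => (hE u).some
  have hpe : ∀ u i, p (e u i).1 = u := fun u i => (hp _ _).1 (e u i).2
  have hbwd : ∀ (f : V → ℂ) u, T.bwd f u = ∑ i : Fin r, f (e u i).1 := by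
    intro f u
    unfold DirTree.bwd
    rw [← (e u).tsum_eq, tsum_fintype]
  -- weights
  set lam : V → ℝ := fun u => (s ^ d u)⁻¹ with hlam
  have hlam0 : ∀ u, 0 < lam u := fun u => by positivity
  set a : V → ℝ := fun u => lam u ^ (1 / q) with ha
  have ha0 : ∀ u, 0 < a u := fun u => Real.rpow_pos_of_pos (hlam0 u) _
  have haq : ∀ u, a u ^ q = lam u := fun u => by
    rw [ha]
    simp only
    rw [← Real.rpow_mul (hlam0 u).le, one_div_mul_cancel hq0.ne', Real.rpow_one]
  have hlamp : ∀ v, lam (p v) ≤ s * lam v := by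
    intro v
    have h : s ^ d v ≤ s * s ^ d (p v) := by
      rw [← pow_succ']
      exact pow_le_pow_right₀ hs1.le (hd1 v)
    simp only [hlam]
    rw [← div_eq_mul_inv, le_div_iff₀ (by positivity), inv_mul_le_iff₀ (by positivity)]
    linarith
  have hap : ∀ v, a (p v) / a v ≤ s ^ (1 / q) := by
    intro v
    rw [div_le_iff₀ (ha0 v), ha]
    simp only
    rw [← Real.mul_rpow hs0.le (hlam0 v).le]
    exact Real.rpow_le_rpow (hlam0 _).le (hlamp v) (by positivity)
  have hatend : ∀ g : ℕ → V, Tendsto (fun n => d (g n)) atTop atTop →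
      Tendsto (fun n => a (g n)) atTop (nhds 0) := by
    intro g hg
    have h1 : Tendsto (fun n => lam (g n)) atTop (nhds 0) :=
      tendsto_inv_atTop_zero.comp ((tendsto_pow_atTop_atTop_of_one_lt hs1).comp hg)
    have h2 := h1.rpow_const (p := 1 / q) (Or.inr (by positivity))
    rwa [Real.zero_rpow (by positivity)] at h2
  -- the space
  set P : ℝ≥0∞ := ENNReal.ofReal q with hPdef
  have hPq : P.toReal = q := ENNReal.toReal_ofReal hq0.le
  have hPt : P ≠ ∞ := ENNReal.ofReal_ne_top
  haveI : Fact (1 ≤ P) := ⟨by rw [hPdef]; simpa using ENNReal.ofReal_le_ofReal hq⟩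
  have hP0 : 0 < P := zero_lt_one.trans_le Fact.out
  have hPpos : 0 < P.toReal := by rw [hPq]; exact hq0
  have hC : ∀ i : Fin r, ∃ C : lp (fun _ : V => ℂ) P →L[ℂ] lp (fun _ : V => ℂ) P,
      ∀ x u, C x u = ((a u / a (e u i).1 : ℝ) : ℂ) * x (e u i).1 := by
    intro i
    refine exists_compCLM P hPt (fun u => (e u i).1) ?_ _ (s ^ (1 / q))
      (fun u => (div_pos (ha0 _) (ha0 _)).le) ?_
    · intro u v huv
      rw [← hpe u i, ← hpe v i]
      exact congrArg p huv
    · intro u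
      have := hap (e u i).1
      rwa [hpe] at this
  choose C hC using hC
  set A : lp (fun _ : V => ℂ) P →L[ℂ] lp (fun _ : V => ℂ) P := ∑ i, C i with hA
  have hAx : ∀ x u, A x u = (a u : ℂ) * T.bwd (fun v => x v / (a v : ℂ)) u := by
    intro x u
    rw [hbwd, hA, ContinuousLinearMap.sum_apply, lp.coeFn_sum, Finset.sum_apply, Finset.mul_sum]
    refine Finset.sum_congr rfl fun i _ => ?_
    rw [hC]
    push_cast
    ring
  have haC : ∀ v, (a v : ℂ) ≠ 0 := fun v => by exact_mod_cast (ha0 v).ne'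
  have hAn : ∀ n x u, (A^[n] x) u / (a u : ℂ) = (T.bwd^[n] (fun v => x v / (a v : ℂ))) u := by
    intro n
    induction n with
    | zero => intro x u; rfl
    | succ n ih =>
      intro x u
      rw [Function.iterate_succ_apply', Function.iterate_succ_apply', hAx,
        mul_div_cancel_left₀ _ (haC u)]
      congr 1
      exact funext (ih x)
  -- basis vectors
  set b : V → lp (fun _ : V => ℂ) P := fun v => lp.single P v (a v : ℂ) with hb
  have hbn : ∀ v, ‖b v‖ = a v := fun v => by
    rw [hb]
    simp only
    rw [lp.norm_single hP0, Complex.norm_real, Real.norm_of_nonneg (ha0 v).le]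
  have hAb : ∀ v, A (b v) = b (p v) := by
    intro v
    ext u
    rw [hAx, hbwd]
    have hbv : ∀ v w, (b v) w / (a w : ℂ) = if w = v then 1 else 0 := by
      intro v w
      by_cases h : w = v
      · subst h
        rw [if_pos rfl, hb]
        simp only
        rw [lp.single_apply_self, div_self (haC _)]
      · rw [if_neg h, hb]
        simp only
        rw [lp.single_apply_ne _ _ _ h, zero_div]
    simp only [hbv]
    have h2 : (b (p v)) u = (a u : ℂ) * (if u = p v then 1 else 0) := by
      rw [← hbv, mul_div_cancel₀ _ (haC u)]
    rw [h2]
    congr 1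
    by_cases h : u = p v
    · rw [if_pos h]
      have hv : v ∈ T.child u := (hp _ _).2 h.symm
      rw [Finset.sum_eq_single ((e u).symm ⟨v, hv⟩)]
      · simp
      · intro i _ hi
        rw [if_neg]
        intro hiv
        apply hi
        rw [Equiv.eq_symm_apply]
        exact Subtype.ext hiv
      · simp
    · rw [if_neg h]
      refine Finset.sum_eq_zero fun i _ => if_neg fun hi => h ?_
      rw [← hi, hpe]
  have hAnb : ∀ n v, A^[n] (b v) = b (p^[n] v) := by
    intro n
    induction n with
    | zero => intro v; rfl
    | succ n ih => intro v; rw [Function.iterate_succ_apply, hAb, ih]; rfl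
  have hbt : ∀ g : ℕ → V, Tendsto (fun n => d (g n)) atTop atTop →
      Tendsto (fun n => b (g n)) atTop (nhds 0) := by
    intro g hg
    rw [tendsto_zero_iff_norm_tendsto_zero]
    simpa only [hbn] using hatend g hg
  have hdense : Dense ((Submodule.span ℂ (Set.range b) : Submodule ℂ _) : Set
      (lp (fun _ : V => ℂ) P)) := by
    intro x
    refine mem_closure_of_tendsto (lp.hasSum_single hPt x) (Eventually.of_forall fun t => ?_)
    refine Submodule.sum_mem _ fun v _ => ?_
    have : lp.single P v (x v) = (x v / (a v : ℂ)) • b v := by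
      rw [hb]
      simp only
      rw [← lp.single_smul, smul_eq_mul, div_mul_cancel₀ _ (haC v)]
    rw [this]
    exact Submodule.smul_mem _ _ (Submodule.subset_span ⟨v, rfl⟩)
  haveI : TopologicalSpace.SeparableSpace (lp (fun _ : V => ℂ) P) := by
    rw [← TopologicalSpace.isSeparable_univ_iff, ← hdense.closure_eq]
    exact ((Set.countable_range b).isSeparable.span).closure
  have hlp : ∀ n v, l (p^[n] v) = l v - n := by
    intro n
    induction n with
    | zero => simp
    | succ n ih => intro v; rw [Function.iterate_succ_apply', hl, ih]; push_cast; ring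
  -- growth criterion for `d`
  have hgrow : ∀ (g : ℕ → V) (K : ℤ), (∀ n : ℕ, (n : ℤ) ≤ |l (g n) - l wstar| + K) →
      Tendsto (fun n => d (g n)) atTop atTop := by
    intro g K h
    rw [← tendsto_natCast_atTop_iff (R := ℤ)]
    refine tendsto_atTop_mono (f := fun n : ℕ => (n : ℤ) + -K) (fun n => ?_)
      (tendsto_atTop_add_const_right _ _ tendsto_natCast_atTop_atTop)
    have h1 := h n
    have h2 := hd2 (g n)
    linarith
  -- a branch of children
  set c : V → V := fun v => (e v ⟨0, hr⟩).1 with hc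
  have hpc : ∀ v, p (c v) = v := fun v => hpe v _
  have hpcn : ∀ n v, p^[n] (c^[n] v) = v := fun n v =>
    (Function.LeftInverse.iterate hpc n) v
  obtain ⟨x, hx⟩ := hc_criterion A (Set.range b) hdense
    (by
      rintro _ ⟨v, rfl⟩
      simp only [hAnb]
      refine hbt _ (hgrow _ |l v - l wstar| fun n => ?_)
      rw [hlp]
      have := abs_sub_abs_le_abs_sub (n : ℤ) (l v - l wstar)
      rw [Nat.abs_cast, ← abs_neg ((n : ℤ) - _)] at this
      have e1 : -((n : ℤ) - (l v - l wstar)) = l v - n - l wstar := by ring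
      rw [e1] at this
      linarith)
    (by
      rintro _ ⟨v, rfl⟩
      refine ⟨fun n => b (c^[n] v), ?_, fun n => by rw [hAnb, hpcn]⟩
      refine hbt _ (hgrow _ |l v - l wstar| fun n => ?_)
      have h1 := hlp n (c^[n] v)
      rw [hpcn] at h1
      have e1 : l (c^[n] v) - l wstar = n + (l v - l wstar) := by linarith
      rw [e1]
      have h2 := neg_abs_le (l v - l wstar)
      have h3 := le_abs_self ((n : ℤ) + (l v - l wstar))
      linarith)
  -- transfer
  have htr : ∀ (y : V → ℂ) v, ‖y v / (a v : ℂ)‖ ^ q * lam v = ‖y v‖ ^ q := by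
    intro y v
    rw [norm_div, Complex.norm_real, Real.norm_of_nonneg (ha0 v).le,
      Real.div_rpow (norm_nonneg _) (ha0 v).le, haq, div_mul_cancel₀ _ (hlam0 v).ne']
  have hmem : ∀ y : lp (fun _ : V => ℂ) P, MemLp' lam q (fun v => y v / (a v : ℂ)) := by
    intro y
    unfold MemLp'
    simp only [htr]
    have := (memℓp_gen_iff hPpos).1 (lp.memℓp y)
    rwa [hPq] at this
  have hnorm : ∀ y : lp (fun _ : V => ℂ) P, pNorm lam q (fun v => y v / (a v : ℂ)) = ‖y‖ := by
    intro y
    unfold pNorm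
    simp only [htr]
    rw [lp.norm_eq_tsum_rpow hPpos, hPq]
  refine ⟨fun v => x v / (a v : ℂ), hmem x, fun g hg ε hε => ?_⟩
  have hgm : Memℓp (fun v => g v * (a v : ℂ)) P := by
    rw [memℓp_gen_iff hPpos, hPq]
    unfold MemLp' at hg
    refine hg.congr fun v => ?_
    have := htr (fun v => g v * (a v : ℂ)) v
    simp only [mul_div_cancel_right₀ _ (haC v)] at this
    exact this
  let y : lp (fun _ : V => ℂ) P := ⟨fun v => g v * (a v : ℂ), hgm⟩
  obtain ⟨_, ⟨n, rfl⟩, hn⟩ := hx.exists_dist_lt y hε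
  have heq : T.bwd^[n] (fun v => x v / (a v : ℂ)) - g
      = fun v => (A^[n] x - y : lp (fun _ : V => ℂ) P) v / (a v : ℂ) := by
    funext v
    rw [Pi.sub_apply, ← hAn, lp.coeFn_sub, Pi.sub_apply, sub_div]
    congr 1
    exact (mul_div_cancel_right₀ _ (haC v)).symm
  refine ⟨n, ?_, ?_⟩
  · rw [heq]
    exact hmem _
  · rw [heq, hnorm, ← dist_eq_norm, dist_comm]
    exact hn
end
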